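/- For every real ν > 0 and every integer j ≥ 1, ρⱼ(−ν²) = (1/(2ʲ·νʲ))·√(2ν/π)·e^{ν}·K_{j−1/2}(ν), where K_{j−1/2}(ν) = ∫₀^{∞} e^{−ν·cosh t}·cosh((j−1/2)·t) dt is the modified Bessel function of the second kind of order j−1/2. -/

import Mathlib

open Real

/-!
The substitution `u = sinh (t / 2)` makes the Bessel integral a finite sum of Gaussian moments.
Indeed `cosh t = 1 + 2 u ^ 2`, and `cosh ((2 n + 1) s) / cosh s` is the polynomial
`∑ k, (n + k).choose (2 k) * (4 u ^ 2) ^ k` in `u = sinh s` (`cosh_odd_mul`), so that for `j = n + 1`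
`K_{n + 1/2}(ν) = 2 e^{-ν} ∑ k, (n + k).choose (2 k) 4 ^ k ∫₀^∞ u ^ (2 k) e^{-2 ν u ^ 2} du`
(`bessel_integral`). The moments are half-integer values of the Gamma function
(`gaussian_moment`), and since `(2 k)! = (2 k)‼ (2 k - 1)‼` the sum agrees term by term with the
one defining `rho`, whose index is `n + 1 + k`.
-/

/-- `ρₖ(x) = 2^{−k}·∑_{j=k}^{2k−1} ((j−1)! / ((2j−2k)!!·(2k−j−1)!))·(−x)^{−j/2}`. -/
noncomputable def rho (k : ℕ) (x : ℝ) : ℝ :=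
  (2 : ℝ) ^ (-(k : ℝ)) * ∑ j ∈ Finset.Icc k (2 * k - 1),
    ((Nat.factorial (j - 1) : ℝ) /
      ((Nat.doubleFactorial (2 * j - 2 * k) : ℝ) * (Nat.factorial (2 * k - j - 1) : ℝ))) *
      (-x) ^ (-(j : ℝ) / 2)

/-- Second difference of `n ↦ (n + k + 1).choose (2 * k + 2)`. -/
lemma choose_second_diff (n k : ℕ) :
    (n + 2 + (k + 1)).choose (2 * (k + 1)) + (n + (k + 1)).choose (2 * (k + 1)) =
      2 * (n + 1 + (k + 1)).choose (2 * (k + 1)) + (n + 1 + k).choose (2 * k) := by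
  have e1 : n + 2 + (k + 1) = (n + k + 1) + 1 + 1 := by ring
  have e2 : n + 1 + (k + 1) = (n + k + 1) + 1 := by ring
  have e3 : 2 * (k + 1) = 2 * k + 1 + 1 := by ring
  have e4 : n + (k + 1) = n + k + 1 := by ring
  have e5 : n + 1 + k = n + k + 1 := by ring
  rw [e1, e2, e3, e4, e5, Nat.choose_succ_succ (n + k + 1 + 1) (2 * k + 1),
    Nat.choose_succ_succ (n + k + 1) (2 * k + 1), Nat.choose_succ_succ (n + k + 1) (2 * k)]
  ring

/-- The recurrence `S (n + 2) + S n = (2 + w) * S (n + 1)` for the polynomials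
`S n = ∑ k, (n + k).choose (2 * k) * w ^ k`. -/
lemma sum_choose_rec (n : ℕ) (w : ℝ) :
    ∑ k ∈ Finset.range (n + 3), ((n + 2 + k).choose (2 * k) : ℝ) * w ^ k =
      (2 + w) * ∑ k ∈ Finset.range (n + 2), ((n + 1 + k).choose (2 * k) : ℝ) * w ^ k -
      ∑ k ∈ Finset.range (n + 1), ((n + k).choose (2 * k) : ℝ) * w ^ k := by
  -- The coefficients vanish for `n < k`, so all sums may be taken over `range (n + 3)`.
  have h1 : ∑ k ∈ Finset.range (n + 1), ((n + k).choose (2 * k) : ℝ) * w ^ k =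
      ∑ k ∈ Finset.range (n + 3), ((n + k).choose (2 * k) : ℝ) * w ^ k := by
    rw [Finset.sum_range_succ _ (n + 2), Finset.sum_range_succ _ (n + 1),
      Nat.choose_eq_zero_of_lt (show n + (n + 2) < 2 * (n + 2) by lia),
      Nat.choose_eq_zero_of_lt (show n + (n + 1) < 2 * (n + 1) by lia)]
    simp
  have h2 : ∑ k ∈ Finset.range (n + 2), ((n + 1 + k).choose (2 * k) : ℝ) * w ^ k =
      ∑ k ∈ Finset.range (n + 3), ((n + 1 + k).choose (2 * k) : ℝ) * w ^ k := by
    rw [Finset.sum_range_succ _ (n + 2),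
      Nat.choose_eq_zero_of_lt (show n + 1 + (n + 2) < 2 * (n + 2) by lia)]
    simp
  rw [add_mul, h1]
  nth_rewrite 1 [h2]
  rw [Finset.sum_range_succ' _ (n + 2), Finset.sum_range_succ' _ (n + 2),
    Finset.sum_range_succ' _ (n + 2), mul_add, Finset.mul_sum, Finset.mul_sum]
  have h3 : ∀ k ∈ Finset.range (n + 2),
      ((n + 2 + (k + 1)).choose (2 * (k + 1)) : ℝ) * w ^ (k + 1) =
      2 * (((n + 1 + (k + 1)).choose (2 * (k + 1)) : ℝ) * w ^ (k + 1)) +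
      w * (((n + 1 + k).choose (2 * k) : ℝ) * w ^ k) -
      ((n + (k + 1)).choose (2 * (k + 1)) : ℝ) * w ^ (k + 1) := by
    intro k _
    have h : (((n + 2 + (k + 1)).choose (2 * (k + 1)) : ℕ) : ℝ) +
        ((n + (k + 1)).choose (2 * (k + 1)) : ℕ) =
        2 * ((n + 1 + (k + 1)).choose (2 * (k + 1)) : ℕ) + ((n + 1 + k).choose (2 * k) : ℕ) := by
      exact_mod_cast choose_second_diff n k
    rw [eq_sub_of_add_eq h]
    ring
  rw [Finset.sum_congr rfl h3, Finset.sum_sub_distrib, Finset.sum_add_distrib]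
  simp
  ring

lemma cosh_odd_mul (n : ℕ) (s : ℝ) :
    Real.cosh ((2 * n + 1) * s) = Real.cosh s *
      ∑ k ∈ Finset.range (n + 1), ((n + k).choose (2 * k) : ℝ) * (4 * Real.sinh s ^ 2) ^ k := by
  have hc := Real.cosh_sq s
  induction n using Nat.twoStepInduction with
  | zero => simp
  | one =>
    norm_num [Finset.sum_range_succ]
    rw [Real.cosh_three_mul]
    linear_combination 4 * Real.cosh s * hc
  | more n ih1 ih2 =>
    rw [show n + 2 + 1 = n + 3 by rfl, sum_choose_rec]
    have h : Real.cosh ((2 * (n + 2 : ℕ) + 1) * s) =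
        (2 + 4 * Real.sinh s ^ 2) * Real.cosh ((2 * (n + 1 : ℕ) + 1) * s) -
        Real.cosh ((2 * n + 1) * s) := by
      have a1 : (2 * (n + 2 : ℕ) + 1) * s = (2 * (n + 1 : ℕ) + 1) * s + 2 * s := by
        push_cast; ring
      have a2 : (2 * n + 1) * s = (2 * (n + 1 : ℕ) + 1) * s - 2 * s := by
        push_cast; ring
      rw [a1, a2, Real.cosh_add, Real.cosh_sub, Real.cosh_two_mul, hc]
      ring
    rw [h, ih1, ih2]
    ring

lemma gaussian_moment (ν : ℝ) (hν : 0 < ν) (k : ℕ) :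
    ∫ u in Set.Ioi (0:ℝ), u ^ (2 * k) * exp (-(2 * ν) * u ^ 2) =
      (Nat.doubleFactorial (2 * k - 1) : ℝ) * √π / (2 * 2 ^ k * (2 * ν) ^ k * √(2 * ν)) := by
  have h := integral_rpow_mul_exp_neg_mul_rpow (p := 2) (q := (2 * k : ℕ)) (b := 2 * ν)
    (by norm_num) (by have : (0:ℝ) ≤ (2 * k : ℕ) := by positivity
                      linarith) (by positivity)
  have e : (((2 * k : ℕ) : ℝ) + 1) / 2 = k + 1 / 2 := by push_cast; ring
  have e' : -(((2 * k : ℕ) : ℝ) + 1) / 2 = -(k + 1 / 2) := by push_cast; ring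
  rw [e, e', Real.Gamma_nat_add_half, Real.rpow_neg (by positivity),
    Real.rpow_add (by positivity), ← Real.sqrt_eq_rpow, Real.rpow_natCast] at h
  simp only [Real.rpow_natCast, Real.rpow_two] at h
  rw [h]
  have : √(2 * ν) ≠ 0 := by positivity
  field_simp

lemma gaussian_moment_integrable (ν : ℝ) (hν : 0 < ν) (k : ℕ) :
    MeasureTheory.IntegrableOn (fun u : ℝ => u ^ (2 * k) * exp (-(2 * ν) * u ^ 2))
      (Set.Ioi 0) := by
  have h := integrableOn_rpow_mul_exp_neg_mul_sq (b := 2 * ν) (s := (2 * k : ℕ)) (by positivity)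
    (by have : (0:ℝ) ≤ (2 * k : ℕ) := by positivity
        linarith)
  simpa only [Real.rpow_natCast] using h

lemma sinh_half_image : (fun t : ℝ => Real.sinh (t / 2)) '' Set.Ioi 0 = Set.Ioi 0 := by
  ext u
  constructor
  · rintro ⟨t, ht, rfl⟩
    have ht : 0 < t := ht
    exact Real.sinh_pos_iff.2 (by positivity)
  · intro hu
    have h : 0 < Real.arsinh u := Real.arsinh_pos_iff.2 hu
    refine ⟨2 * Real.arsinh u, ?_, ?_⟩
    · exact Set.mem_Ioi.2 (by positivity)
    · simp [Real.sinh_arsinh]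

/-- The substitution `u = sinh (t / 2)` in the Bessel integral of order `n + 1 / 2`. -/
lemma bessel_integral (ν : ℝ) (hν : 0 < ν) (n : ℕ) :
    ∫ t in Set.Ioi (0:ℝ), exp (-ν * Real.cosh t) * Real.cosh (((n : ℝ) + 1 / 2) * t) =
      2 * exp (-ν) * ∑ k ∈ Finset.range (n + 1), ((n + k).choose (2 * k) : ℝ) * 4 ^ k *
        ∫ u in Set.Ioi (0:ℝ), u ^ (2 * k) * exp (-(2 * ν) * u ^ 2) := by
  have hd : ∀ t ∈ Set.Ioi (0:ℝ), HasDerivWithinAt (fun t : ℝ => Real.sinh (t / 2))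
      (Real.cosh (t / 2) * (1 / 2)) (Set.Ioi 0) t := fun t _ =>
    (((hasDerivAt_id t).div_const 2).sinh).hasDerivWithinAt
  have hinj : Set.InjOn (fun t : ℝ => Real.sinh (t / 2)) (Set.Ioi 0) := by
    intro a _ b _ hab
    have := Real.sinh_injective hab
    linarith
  have hs := MeasureTheory.integral_image_eq_integral_abs_deriv_smul measurableSet_Ioi hd hinj
    (fun u => ∑ k ∈ Finset.range (n + 1), ((n + k).choose (2 * k) : ℝ) * 4 ^ k *
      (u ^ (2 * k) * exp (-(2 * ν) * u ^ 2)))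
  rw [sinh_half_image, MeasureTheory.integral_finsetSum _
    (fun k _ => (gaussian_moment_integrable ν hν k).const_mul _)] at hs
  simp only [MeasureTheory.integral_const_mul] at hs
  rw [hs, ← MeasureTheory.integral_const_mul]
  congr 1
  ext t
  have h1 : ((n : ℝ) + 1 / 2) * t = (2 * n + 1) * (t / 2) := by ring
  have h2 : Real.cosh t = 1 + 2 * Real.sinh (t / 2) ^ 2 := by
    have : Real.cosh t = Real.cosh (2 * (t / 2)) := by congr 1; ring
    rw [this, Real.cosh_two_mul, Real.cosh_sq]
    ring
  have h3 : -ν * (1 + 2 * Real.sinh (t / 2) ^ 2) =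
      -ν + -(2 * ν) * Real.sinh (t / 2) ^ 2 := by ring
  have hp := Real.cosh_pos (t / 2)
  rw [h1, cosh_odd_mul, h2, h3, Real.exp_add, abs_of_pos (by positivity), smul_eq_mul,
    Finset.mul_sum, Finset.mul_sum, Finset.mul_sum, Finset.mul_sum]
  refine Finset.sum_congr rfl fun k _ => ?_
  rw [mul_pow, pow_mul]
  ring

/-- The coefficients of `rho (n + 1)`, rewritten by `(2 * k)! = (2 * k)‼ * (2 * k - 1)‼`. -/
lemma choose_mul_doubleFactorial (n k : ℕ) (hk : k ≤ n) :
    ((n + k).factorial : ℝ) / ((Nat.doubleFactorial (2 * k) : ℝ) * ((n - k).factorial : ℝ)) =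
      ((n + k).choose (2 * k) : ℝ) * (Nat.doubleFactorial (2 * k - 1) : ℝ) := by
  have h1 := Nat.choose_mul_factorial_mul_factorial (show 2 * k ≤ n + k by lia)
  have h2 : (2 * k).factorial = Nat.doubleFactorial (2 * k) * Nat.doubleFactorial (2 * k - 1) := by
    cases k with
    | zero => rfl
    | succ k => exact Nat.factorial_eq_mul_doubleFactorial (2 * k + 1)
  rw [h2, show n + k - 2 * k = n - k by lia] at h1
  rw [← h1]
  have h3 : (Nat.doubleFactorial (2 * k) : ℝ) ≠ 0 := by
    exact_mod_cast (Nat.doubleFactorial_pos _).ne'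
  have h4 : ((n - k).factorial : ℝ) ≠ 0 := by positivity
  push_cast
  field_simp

/-- The sum defining `rho (n + 1)`, reindexed by `k = j - (n + 1)`. -/
lemma rho_succ_neg_sq (ν : ℝ) (hν : 0 < ν) (n : ℕ) :
    rho (n + 1) (-ν ^ 2) = (2 ^ (n + 1))⁻¹ * ∑ k ∈ Finset.range (n + 1),
      ((n + k).choose (2 * k) : ℝ) * (Nat.doubleFactorial (2 * k - 1) : ℝ) *
        (ν ^ (n + 1 + k))⁻¹ := by
  unfold rho
  have hI : Finset.Icc (n + 1) (2 * (n + 1) - 1) = Finset.Ico (n + 1) (2 * n + 2) := by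
    ext; simp; lia
  rw [hI, Finset.sum_Ico_eq_sum_range, show 2 * n + 2 - (n + 1) = n + 1 by lia,
    Real.rpow_neg (by norm_num), Real.rpow_natCast]
  congr 1
  refine Finset.sum_congr rfl fun k hk => ?_
  have hk : k ≤ n := by have := Finset.mem_range.1 hk; lia
  rw [← choose_mul_doubleFactorial n k hk, show n + 1 + k - 1 = n + k by lia,
    show 2 * (n + 1 + k) - 2 * (n + 1) = 2 * k by lia,
    show 2 * (n + 1) - (n + 1 + k) - 1 = n - k by lia, neg_neg]
  congr 1
  rw [← Real.rpow_natCast ν 2, ← Real.rpow_mul hν.le, ← Real.rpow_natCast, ← Real.rpow_neg hν.le]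
  congr 1
  push_cast
  ring

/-- `ρⱼ(−ν²) = (1/(2ʲ·νʲ))·√(2ν/π)·e^ν·K_{j−1/2}(ν)`, where `K_{j−1/2}(ν)` is the
modified Bessel function of the second kind of order `j − 1/2`, given by its
integral representation. -/
theorem stmt_11 (ν : ℝ) (hν : 0 < ν) (j : ℕ) (hj : 1 ≤ j) :
    rho j (-ν ^ 2) = (1 / (2 ^ j * ν ^ j)) * Real.sqrt (2 * ν / π) * exp ν *
      ∫ t in Set.Ioi (0:ℝ), exp (-ν * Real.cosh t) * Real.cosh (((j : ℝ) - 1 / 2) * t) := by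
  obtain ⟨n, rfl⟩ : ∃ n, j = n + 1 := ⟨j - 1, by lia⟩
  have e : ((n + 1 : ℕ) : ℝ) - 1 / 2 = n + 1 / 2 := by push_cast; ring
  rw [e, bessel_integral ν hν, rho_succ_neg_sq ν hν]
  simp only [gaussian_moment ν hν]
  rw [Finset.mul_sum, Finset.mul_sum, Finset.mul_sum]
  refine Finset.sum_congr rfl fun k _ => ?_
  have h1 : √(2 * ν) ≠ 0 := by positivity
  have h2 : √π ≠ 0 := by positivity
  have h4 : (4 : ℝ) ^ k = 2 ^ k * 2 ^ k := by rw [← mul_pow]; norm_num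
  rw [Real.sqrt_div (by positivity), Real.exp_neg, h4, mul_pow 2 ν k, pow_add ν (n + 1) k]
  have h5 := (Real.exp_pos ν).ne'
  field_simp
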